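/- (Linearity of the reward program transformation.) Let S be a pGCL program and let f : ℝ≥0∞ → ℝ≥0∞ be monotone. Then for all α, β ∈ ℝ≥0, wp[T_{α·f+β}(S)](0) = α·wp[T_f(S)](0) + β. -/

import Mathlib

open ENNReal

/-- Program states: maps from variables to extended non-negative reals. -/
abbrev PState (V : Type) := V → ℝ≥0∞

/-- Expectations: maps from states to extended non-negative reals. -/
abbrev Expct (V : Type) := PState V → ℝ≥0∞

/-- Syntax of pGCL programs. -/
inductive pGCL (V : Type) : Type 1
  | skip : pGCL V
  | assign : V → Expct V → pGCL V
  | reward : Expct V → pGCL V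
  | seq : pGCL V → pGCL V → pGCL V
  | prob : (p : ℝ≥0∞) → p ≤ 1 → pGCL V → pGCL V → pGCL V
  | ifte : (PState V → Bool) → pGCL V → pGCL V → pGCL V
  | loop : (PState V → Bool) → pGCL V → pGCL V

variable {V : Type} [DecidableEq V]

/-- The weakest pre-expectation transformer, bundled as an order hom. -/
noncomputable def wpHom : pGCL V → (Expct V →o Expct V)
  | .skip => OrderHom.id
  | .assign x e => ⟨fun X σ => X (Function.update σ x (e σ)), fun _ _ h σ => h _⟩
  | .reward e => ⟨fun X σ => e σ + X σ, fun _ _ h σ => add_le_add_right (h σ) _⟩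
  | .seq S₁ S₂ => (wpHom S₁).comp (wpHom S₂)
  | .prob p _ S₁ S₂ =>
      ⟨fun X σ => p * wpHom S₁ X σ + (1 - p) * wpHom S₂ X σ, by
        intro X Y h σ
        exact add_le_add (mul_le_mul_right ((wpHom S₁).monotone h σ) p)
          (mul_le_mul_right ((wpHom S₂).monotone h σ) (1 - p))⟩
  | .ifte b S₁ S₂ =>
      ⟨fun X σ => if b σ then wpHom S₁ X σ else wpHom S₂ X σ, by
        intro X Y h σ
        dsimp only
        split
        · exact (wpHom S₁).monotone h σ
        · exact (wpHom S₂).monotone h σ⟩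
  | .loop b S =>
      ⟨fun X => OrderHom.lfp
        ⟨fun Y σ => if b σ then wpHom S Y σ else X σ, by
          intro Y₁ Y₂ h σ
          dsimp only
          split
          · exact (wpHom S).monotone h σ
          · exact le_rfl⟩, by
        intro X₁ X₂ h
        apply OrderHom.lfp_le
        have := OrderHom.map_lfp
          (⟨fun Y σ => if b σ then wpHom S Y σ else X₂ σ, by
            intro Y₁ Y₂ h σ
            dsimp only
            split
            · exact (wpHom S).monotone h σ
            · exact le_rfl⟩ : Expct V →o Expct V)
        refine le_trans (fun σ => ?_) (le_of_eq this)
        change (if b σ then wpHom S _ σ else X₁ σ) ≤ (if b σ then wpHom S _ σ else X₂ σ)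
        split
        · exact le_rfl
        · exact h σ⟩

/-- The weakest pre-expectation `wp[S](X)`. -/
noncomputable def wp (S : pGCL V) (X : Expct V) : Expct V := wpHom S X

/-- An expression does not depend on variable `τ`. -/
def UnusedE (τ : V) (e : Expct V) : Prop := ∀ σ v, e (Function.update σ τ v) = e σ

/-- A Boolean guard does not depend on variable `τ`. -/
def UnusedB (τ : V) (b : PState V → Bool) : Prop := ∀ σ v, b (Function.update σ τ v) = b σ

/-- Variable `τ` does not occur in the program `S`. -/
def NotOccurs (τ : V) : pGCL V → Prop
  | .skip => True
  | .assign x e => x ≠ τ ∧ UnusedE τ e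
  | .reward e => UnusedE τ e
  | .seq S₁ S₂ => NotOccurs τ S₁ ∧ NotOccurs τ S₂
  | .prob _ _ S₁ S₂ => NotOccurs τ S₁ ∧ NotOccurs τ S₂
  | .ifte b S₁ S₂ => UnusedB τ b ∧ NotOccurs τ S₁ ∧ NotOccurs τ S₂
  | .loop b S => UnusedB τ b ∧ NotOccurs τ S

/-- Auxiliary reward transformation `T'_f` with ghost variable `τ`:
replaces `reward(e)` by `reward(f(τ+e) − f(τ)); τ := τ + e`. -/
noncomputable def Taux (τ : V) (f : ℝ≥0∞ → ℝ≥0∞) : pGCL V → pGCL V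
  | .reward e =>
      .seq (.reward fun σ => f (σ τ + e σ) - f (σ τ)) (.assign τ (fun σ => σ τ + e σ))
  | .seq S₁ S₂ => .seq (Taux τ f S₁) (Taux τ f S₂)
  | .prob p hp S₁ S₂ => .prob p hp (Taux τ f S₁) (Taux τ f S₂)
  | .ifte b S₁ S₂ => .ifte b (Taux τ f S₁) (Taux τ f S₂)
  | .loop b S => .loop b (Taux τ f S)
  | .skip => .skip
  | .assign x e => .assign x e

/-- Full reward transformation `T_f(S) = τ := 0; reward(f(0)); T'_f(S)`. -/
noncomputable def Tfull (τ : V) (f : ℝ≥0∞ → ℝ≥0∞) (S : pGCL V) : pGCL V :=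
  .seq (.assign τ (fun _ => 0)) (.seq (.reward fun _ => f 0) (Taux τ f S))

/-!
Scaling post-expectations by a constant `c` semiconjugates `wp S` to `wp S'` as soon as `S'` arises
from `S` by scaling every reward by `c`: for loops this is the fusion rule for least fixed points,
which applies because scaling preserves suprema (even for `c = 0`). The constant `β` cancels in the
differences `f (τ + e) - f τ`, so `T'_{α·f+β}` scales every reward of `T'_f` by `α`, and `β`
survives only in the initial reward `f 0`.
-/

theorem map_lfp_eq_lfp_of_semiconj {α β : Type*} [CompleteLattice α] [CompleteLattice β]
    {l : α → β} (map_sSup : ∀ s, l (sSup s) = ⨆ a ∈ s, l a) {f : α →o α} {g : β →o β}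
    (h : Function.Semiconj l f g) : l f.lfp = g.lfp := by
  apply le_antisymm
  · refine f.lfp_induction (p := fun a => l a ≤ g.lfp) (fun a ha _ => ?_) (fun s hs => ?_)
    · exact (h a).trans_le (g.map_le_lfp ha)
    · exact (map_sSup s).trans_le (iSup₂_le hs)
  · apply g.lfp_le_fixed
    rw [← h, f.map_lfp]

theorem ennreal_smul_sSup_pi {ι : Type*} (c : ℝ≥0∞) (s : Set (ι → ℝ≥0∞)) :
    c • sSup s = ⨆ X ∈ s, c • X := by
  ext i
  simp only [sSup_eq_iSup, Pi.smul_apply, iSup_apply, ENNReal.smul_iSup]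

theorem affine_tsub_affine (α β : NNReal) (a b : ℝ≥0∞) :
    (α * a + β : ℝ≥0∞) - (α * b + β) = α * (a - b) := by
  rw [ENNReal.add_sub_add_eq_sub_right ENNReal.coe_ne_top,
    ENNReal.mul_sub fun _ _ => ENNReal.coe_ne_top]

section WeakestPreexpectation

variable (b : PState V → Bool) (S S₁ S₂ : pGCL V) (X : Expct V)

theorem wp_skip : wp (.skip : pGCL V) = id := rfl

theorem wp_assign (x : V) (e : Expct V) :
    wp (.assign x e) X = fun σ => X (Function.update σ x (e σ)) := rfl

theorem wp_reward (e : Expct V) : wp (.reward e) X = e + X := rfl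

theorem wp_seq : wp (.seq S₁ S₂) = wp S₁ ∘ wp S₂ := rfl

theorem wp_prob (p : ℝ≥0∞) (hp : p ≤ 1) :
    wp (.prob p hp S₁ S₂) X = p • wp S₁ X + (1 - p) • wp S₂ X := rfl

theorem wp_ifte :
    wp (.ifte b S₁ S₂) X = fun σ => if b σ then wp S₁ X σ else wp S₂ X σ := rfl

theorem monotone_wp : Monotone (wp S) := (wpHom S).monotone

/-- The characteristic functional `Y ↦ [b]·wp[S](Y) + [¬b]·X` of `while(b){S}` with respect to the
post-expectation `X`, whose least fixed point is `wp[while(b){S}](X)`. -/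
noncomputable def loopFunctional : Expct V →o Expct V where
  toFun Y σ := if b σ then wp S Y σ else X σ
  monotone' Y₁ Y₂ h σ := by
    dsimp only
    split
    exacts [monotone_wp S h σ, le_rfl]

theorem loopFunctional_apply (Y : Expct V) (σ : PState V) :
    loopFunctional b S X Y σ = if b σ then wp S Y σ else X σ := rfl

theorem wp_loop : wp (.loop b S) X = (loopFunctional b S X).lfp := rfl

end WeakestPreexpectation

section Scaling

open Function (Semiconj)

variable {c : ℝ≥0∞} {S S' S₁ S₁' S₂ S₂' : pGCL V}

theorem semiconj_smul_wp_skip : Semiconj (c • ·) (wp (.skip : pGCL V)) (wp .skip) := by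
  rw [wp_skip]
  exact Semiconj.id_right

theorem semiconj_smul_wp_assign (x : V) (e : Expct V) :
    Semiconj (c • ·) (wp (.assign x e)) (wp (.assign x e)) := fun X => by
  ext σ
  simp only [wp_assign, Pi.smul_apply]

theorem semiconj_smul_wp_reward (e : Expct V) :
    Semiconj (c • ·) (wp (.reward e)) (wp (.reward (c • e))) := fun X => by
  simp only [wp_reward, smul_add]

theorem semiconj_smul_wp_seq (h₁ : Semiconj (c • ·) (wp S₁) (wp S₁'))
    (h₂ : Semiconj (c • ·) (wp S₂) (wp S₂')) :
    Semiconj (c • ·) (wp (.seq S₁ S₂)) (wp (.seq S₁' S₂')) := by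
  rw [wp_seq, wp_seq]
  exact h₁.comp_right h₂

theorem semiconj_smul_wp_prob (p : ℝ≥0∞) (hp : p ≤ 1) (h₁ : Semiconj (c • ·) (wp S₁) (wp S₁'))
    (h₂ : Semiconj (c • ·) (wp S₂) (wp S₂')) :
    Semiconj (c • ·) (wp (.prob p hp S₁ S₂)) (wp (.prob p hp S₁' S₂')) := fun X => by
  simp only [wp_prob, smul_add, smul_comm c, h₁ X, h₂ X]

theorem semiconj_smul_wp_ifte (b : PState V → Bool) (h₁ : Semiconj (c • ·) (wp S₁) (wp S₁'))
    (h₂ : Semiconj (c • ·) (wp S₂) (wp S₂')) :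
    Semiconj (c • ·) (wp (.ifte b S₁ S₂)) (wp (.ifte b S₁' S₂')) := fun X => by
  ext σ
  simp only [wp_ifte, ← h₁ X, ← h₂ X, Pi.smul_apply, smul_ite]

theorem semiconj_smul_loopFunctional (b : PState V → Bool) (h : Semiconj (c • ·) (wp S) (wp S'))
    (X : Expct V) :
    Semiconj (c • ·) (loopFunctional b S X) (loopFunctional b S' (c • X)) := fun Y => by
  ext σ
  simp only [loopFunctional_apply, ← h Y, Pi.smul_apply, smul_ite]

theorem semiconj_smul_wp_loop (b : PState V → Bool) (h : Semiconj (c • ·) (wp S) (wp S')) :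
    Semiconj (c • ·) (wp (.loop b S)) (wp (.loop b S')) := fun X => by
  simp only [wp_loop]
  exact map_lfp_eq_lfp_of_semiconj (ennreal_smul_sSup_pi c) (semiconj_smul_loopFunctional b h X)

theorem semiconj_smul_wp_Taux (τ : V) (f : ℝ≥0∞ → ℝ≥0∞) (α β : NNReal) (S : pGCL V) :
    Semiconj ((α : ℝ≥0∞) • ·) (wp (Taux τ f S)) (wp (Taux τ (fun x => α * f x + β) S)) := by
  induction S with
  | skip => exact semiconj_smul_wp_skip
  | assign x e => exact semiconj_smul_wp_assign x e
  | reward e =>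
    have reward_scaled : (fun σ : PState V => (α * f (σ τ + e σ) + β) - (α * f (σ τ) + β)) =
        (α : ℝ≥0∞) • fun σ => f (σ τ + e σ) - f (σ τ) :=
      funext fun _ => affine_tsub_affine α β _ _
    simp only [Taux, reward_scaled]
    exact semiconj_smul_wp_seq (semiconj_smul_wp_reward _) (semiconj_smul_wp_assign τ _)
  | seq _ _ ih₁ ih₂ => exact semiconj_smul_wp_seq ih₁ ih₂
  | prob p hp _ _ ih₁ ih₂ => exact semiconj_smul_wp_prob p hp ih₁ ih₂
  | ifte b _ _ ih₁ ih₂ => exact semiconj_smul_wp_ifte b ih₁ ih₂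
  | loop b _ ih => exact semiconj_smul_wp_loop b ih

end Scaling

theorem wp_Tfull_apply (τ : V) (f : ℝ≥0∞ → ℝ≥0∞) (S : pGCL V) (X : Expct V) (σ : PState V) :
    wp (Tfull τ f S) X σ = f 0 + wp (Taux τ f S) X (Function.update σ τ 0) := by
  simp only [Tfull, wp_seq, Function.comp_apply, wp_assign, wp_reward, Pi.add_apply]

theorem wp_Tfull_linear_general (S : pGCL V) (f : ℝ≥0∞ → ℝ≥0∞) (τ : V) (α β : NNReal)
    (X : Expct V) :
    wp (Tfull τ (fun x => α * f x + β) S) ((α : ℝ≥0∞) • X)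
      = fun σ => α * wp (Tfull τ f S) X σ + β := by
  ext σ
  have wp_Taux_smul : wp (Taux τ (fun x => α * f x + β) S) ((α : ℝ≥0∞) • X) =
      (α : ℝ≥0∞) • wp (Taux τ f S) X := (semiconj_smul_wp_Taux τ f α β S X).symm
  simp only [wp_Tfull_apply, wp_Taux_smul, Pi.smul_apply, smul_eq_mul]
  ring

/-- Linearity of the reward program transformation:
`wp[T_{α·f+β}(S)](0) = α·wp[T_f(S)](0) + β` for `α, β ∈ ℝ≥0`. -/
theorem wp_Tfull_linear (S : pGCL V) (f : ℝ≥0∞ → ℝ≥0∞) (hf : Monotone f)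
    (τ : V) (hτ : NotOccurs τ S) (α β : NNReal) :
    wp (Tfull τ (fun x => α * f x + β) S) 0
      = fun σ => α * wp (Tfull τ f S) 0 σ + β := by
  simpa only [smul_zero] using wp_Tfull_linear_general S f τ α β 0
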